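/- Let t ∈ ℤ_+ and let S be a finite-dimensional simple module over the Lie superalgebra p^(t). Then dim S = 1. -/

import Mathlib

/-- A module over the Lie superalgebra `p^{(t)} = ⊕_{m>t} ℂ L_m ⊕ ⊕_{m>t} ℂ G_{m+1/2}`
(a subalgebra of the Neveu–Schwarz algebra).  `L m` is the action of `L_m` and `G j` is
the action of `G_{j+1/2}`; only the operators with index `> t` are part of the structure
(the relations are imposed only for indices `> t`). -/
structure PRep (t : ℕ) : Type 1 where
  carrier : Type
  [isAddCommGroup : AddCommGroup carrier]
  [isModule : Module ℂ carrier]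
  L : ℤ → carrier →ₗ[ℂ] carrier
  G : ℤ → carrier →ₗ[ℂ] carrier
  rel_LL : ∀ m n : ℤ, (t : ℤ) < m → (t : ℤ) < n → ∀ v : carrier,
    L m (L n v) - L n (L m v) = ((m : ℂ) - n) • L (m + n) v
  rel_LG : ∀ m j : ℤ, (t : ℤ) < m → (t : ℤ) < j → ∀ v : carrier,
    L m (G j v) - G j (L m v) = (((m : ℂ) - 2 * j - 1) / 2) • G (m + j) v
  rel_GG : ∀ j k : ℤ, (t : ℤ) < j → (t : ℤ) < k → ∀ v : carrier,
    G j (G k v) + G k (G j v) = (2 : ℂ) • L (j + k + 1) v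

attribute [instance] PRep.isAddCommGroup PRep.isModule

def PRep.Invariant {t : ℕ} (V : PRep t) (p : Submodule ℂ V.carrier) : Prop :=
  (∀ m : ℤ, (t : ℤ) < m → ∀ v ∈ p, V.L m v ∈ p) ∧
    (∀ j : ℤ, (t : ℤ) < j → ∀ v ∈ p, V.G j v ∈ p)

def PRep.IsSimple {t : ℕ} (V : PRep t) : Prop :=
  (∃ v : V.carrier, v ≠ 0) ∧
    ∀ p : Submodule ℂ V.carrier, V.Invariant p → p = ⊥ ∨ p = ⊤

/-!
A linear dependence among the operators `L_i` is shortened by bracketing it with one of the `L_p`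
occurring in it, because `[L_p, L_i] = (p - i) L_{p+i}` kills exactly the term `i = p`. Hence on a
finite-dimensional module some `L_k` is zero, and then so are all `L_k` and `G_{k+1/2}` of large
degree.

On a simple module one may now descend in the degree. Suppose that, among the indices `k > n`, all
`G_{k+1/2}` and all `L_k` with `k ≥ 2t + 3` are zero. Then `G_{n+1/2}` anticommutes with every `G`,
commutes with every `L` and has square zero, so its kernel is a nonzero submodule and
`G_{n+1/2} = 0`. Moreover, if `n ≥ 2t + 3`, then `L_n` is central, hence a scalar by Schur's lemma, and it is a
multiple of a commutator, so its trace is zero and `L_n = 0`. At the end of the descent only a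
commuting family of operators `L_n` remains, and these are scalars by Schur's lemma as well.
-/

section LinearIndependence

variable {K A : Type*} [Field K] [CharZero K] [LieRing A] [LieAlgebra K A] {L : ℤ → A} {I : Set ℤ}

-- The shift `q` lets a relation be bracketed with one of its terms without moving the index set.
theorem eq_zero_of_sum_smul_shift_eq_zero (hadd : ∀ m ∈ I, ∀ n ∈ I, m + n ∈ I)
    (hlie : ∀ m ∈ I, ∀ n ∈ I, ⁅L m, L n⁆ = ((m : K) - n) • L (m + n))
    (hne : ∀ m ∈ I, L m ≠ 0) (s : Finset ℤ) (g : ℤ → K) (q : ℤ) (hI : ∀ i ∈ s, i + q ∈ I)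
    (hsum : ∑ i ∈ s, g i • L (i + q) = 0) : ∀ i ∈ s, g i = 0 := by
  induction s using Finset.induction_on generalizing g q with
  | empty => simp
  | insert p s hp ih =>
    rw [Finset.forall_mem_insert] at hI
    obtain ⟨hpI, hsI⟩ := hI
    rw [Finset.sum_insert hp] at hsum
    have hbracket : ∑ i ∈ s, (g i * ((p : K) - i)) • L (i + (p + 2 * q)) = 0 := by
      calc ∑ i ∈ s, (g i * ((p : K) - i)) • L (i + (p + 2 * q))
          = ∑ i ∈ s, g i • ⁅L (p + q), L (i + q)⁆ := by
            refine Finset.sum_congr rfl fun i hi ↦ ?_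
            rw [hlie _ hpI _ (hsI i hi), smul_smul]
            congr 2
            · push_cast; ring
            · ring
        _ = ⁅L (p + q), g p • L (p + q) + ∑ i ∈ s, g i • L (i + q)⁆ := by
            simp [lie_sum]
        _ = 0 := by rw [hsum, lie_zero]
    have hshift : ∀ i ∈ s, i + (p + 2 * q) ∈ I := fun i hi ↦ by
      convert hadd _ (hsI i hi) _ hpI using 1
      ring
    have hs : ∀ i ∈ s, g i = 0 := fun i hi ↦ by
      have hpi : (p : K) - i ≠ 0 :=
        sub_ne_zero.2 (Int.cast_injective.ne (ne_of_mem_of_not_mem hi hp).symm)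
      exact (mul_eq_zero.1 (ih _ _ hshift hbracket i hi)).resolve_right hpi
    rw [Finset.sum_eq_zero fun i hi ↦ by rw [hs i hi, zero_smul], add_zero] at hsum
    exact Finset.forall_mem_insert _ _ _ |>.2
      ⟨(smul_eq_zero.1 hsum).resolve_right (hne _ hpI), hs⟩

theorem linearIndepOn_of_lie_eq_sub_smul (hadd : ∀ m ∈ I, ∀ n ∈ I, m + n ∈ I)
    (hlie : ∀ m ∈ I, ∀ n ∈ I, ⁅L m, L n⁆ = ((m : K) - n) • L (m + n))
    (hne : ∀ m ∈ I, L m ≠ 0) : LinearIndepOn K L I :=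
  linearIndepOn_iff'.2 fun s g hsI hsum ↦
    eq_zero_of_sum_smul_shift_eq_zero hadd hlie hne s g 0
      (fun i hi ↦ by simpa using hsI hi) (by simpa using hsum)

end LinearIndependence

theorem eq_zero_of_lie_eq_smul_one {K V : Type*} [Field K] [CharZero K] [AddCommGroup V]
    [Module K V] [FiniteDimensional K V] [Nontrivial V] {f g : Module.End K V} {c : K}
    (h : ⁅f, g⁆ = c • (1 : Module.End K V)) : c = 0 := by
  have htrace : c * Module.finrank K V = 0 := by
    simpa using (congrArg (LinearMap.trace K V) h).symm
  exact (mul_eq_zero.1 htrace).resolve_right (Nat.cast_ne_zero.2 Module.finrank_pos.ne')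

namespace PRep

variable {t : ℕ} {S : PRep t}

section Relations

variable {m n : ℤ}

theorem lie_L_L (hm : t < m) (hn : t < n) :
    ⁅(S.L m : Module.End ℂ S.carrier), S.L n⁆ = ((m : ℂ) - n) • S.L (m + n) :=
  LinearMap.ext (S.rel_LL m n hm hn)

theorem lie_L_G (hm : t < m) (hn : t < n) :
    ⁅(S.L m : Module.End ℂ S.carrier), S.G n⁆ = (((m : ℂ) - 2 * n - 1) / 2) • S.G (m + n) :=
  LinearMap.ext (S.rel_LG m n hm hn)

theorem G_mul_G_add_G_mul_G (hm : t < m) (hn : t < n) :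
    (S.G m * S.G n + S.G n * S.G m : Module.End ℂ S.carrier) = (2 : ℂ) • S.L (m + n + 1) :=
  LinearMap.ext (S.rel_GG m n hm hn)

theorem commute_L_L (hm : t < m) (hn : t < n) (h : S.L (m + n) = 0) :
    Commute (S.L m : Module.End ℂ S.carrier) (S.L n) :=
  commute_iff_lie_eq.2 (by rw [lie_L_L hm hn, h, smul_zero])

theorem commute_L_G (hm : t < m) (hn : t < n) (h : S.G (m + n) = 0) :
    Commute (S.L m : Module.End ℂ S.carrier) (S.G n) :=
  commute_iff_lie_eq.2 (by rw [lie_L_G hm hn, h, smul_zero])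

theorem L_add_eq_zero (hm : t < m) (hn : t < n) (hne : m ≠ n) (h : S.L m = 0) :
    S.L (m + n) = 0 := by
  have hcoeff : (m : ℂ) - n ≠ 0 := sub_ne_zero.2 (Int.cast_injective.ne hne)
  ext v
  simpa [h, hcoeff] using (S.rel_LL m n hm hn v).symm

theorem G_add_eq_zero (hm : t < m) (hn : t < n) (hne : m ≠ 2 * n + 1) (h : S.L m = 0) :
    S.G (m + n) = 0 := by
  have hcoeff : ((m : ℂ) - 2 * n - 1) ≠ 0 := by
    exact_mod_cast (show m - 2 * n - 1 ≠ 0 by omega)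
  ext v
  simpa [h, hcoeff] using (S.rel_LG m n hm hn v).symm

end Relations

theorem invariant_ker {f : Module.End ℂ S.carrier} (ε : ℂ)
    (hL : ∀ m : ℤ, t < m → Commute f (S.L m))
    (hG : ∀ j : ℤ, t < j → f * S.G j = ε • (S.G j * f)) : S.Invariant (LinearMap.ker f) := by
  refine ⟨fun m hm v hv ↦ ?_, fun j hj v hv ↦ ?_⟩ <;> rw [LinearMap.mem_ker] at hv ⊢
  · simpa [hv] using LinearMap.congr_fun (hL m hm).eq v
  · simpa [hv] using LinearMap.congr_fun (hG j hj) v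

theorem IsSimple.nontrivial (hS : S.IsSimple) : Nontrivial S.carrier :=
  nontrivial_iff_exists_ne 0 |>.2 hS.1

theorem IsSimple.eq_zero_of_invariant_ker (hS : S.IsSimple) {f : Module.End ℂ S.carrier}
    (hinv : S.Invariant (LinearMap.ker f)) (hker : LinearMap.ker f ≠ ⊥) : f = 0 :=
  LinearMap.ker_eq_top.1 ((hS.2 _ hinv).resolve_left hker)

theorem IsSimple.exists_eq_smul_one_of_commute [FiniteDimensional ℂ S.carrier]
    (hS : S.IsSimple) {f : Module.End ℂ S.carrier}
    (hL : ∀ m : ℤ, t < m → Commute f (S.L m))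
    (hG : ∀ j : ℤ, t < j → Commute f (S.G j)) : ∃ c : ℂ, f = c • 1 := by
  have := hS.nontrivial
  obtain ⟨c, hc⟩ := Module.End.exists_eigenvalue f
  have hscalar (g : Module.End ℂ S.carrier) : Commute (c • 1) g := (Commute.one_left g).smul_left c
  have hinv : S.Invariant (LinearMap.ker (f - c • 1)) :=
    invariant_ker 1 (fun m hm ↦ (hL m hm).sub_left (hscalar _)) fun j hj ↦ by
      rw [one_smul, ((hG j hj).sub_left (hscalar _)).eq]
  refine ⟨c, sub_eq_zero.1 (hS.eq_zero_of_invariant_ker hinv ?_)⟩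
  rwa [Module.End.hasEigenvalue_iff, Module.End.eigenspace_def] at hc

theorem IsSimple.L_eq_zero_of_commute [FiniteDimensional ℂ S.carrier] (hS : S.IsSimple) {n : ℤ}
    (hn : 2 * (t : ℤ) + 3 ≤ n)
    (hL : ∀ m : ℤ, t < m → Commute (S.L n : Module.End ℂ S.carrier) (S.L m))
    (hG : ∀ j : ℤ, t < j → Commute (S.L n : Module.End ℂ S.carrier) (S.G j)) : S.L n = 0 := by
  have := hS.nontrivial
  obtain ⟨c, hc⟩ := hS.exists_eq_smul_one_of_commute hL hG
  obtain ⟨a, b, ha, hb, hab, rfl⟩ : ∃ a b : ℤ, t < a ∧ t < b ∧ a ≠ b ∧ a + b = n :=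
    ⟨t + 1, n - (t + 1), by omega, by omega, by omega, by omega⟩
  have hlie : ⁅(S.L a : Module.End ℂ S.carrier), S.L b⁆ = (((a : ℂ) - b) * c) • 1 := by
    rw [lie_L_L ha hb, hc, smul_smul]
  have hab' : (a : ℂ) - b ≠ 0 := sub_ne_zero.2 (Int.cast_injective.ne hab)
  rw [hc, (mul_eq_zero.1 (eq_zero_of_lie_eq_smul_one hlie)).resolve_left hab', zero_smul]

theorem IsSimple.G_eq_zero_of_anticommute (hS : S.IsSimple) {n : ℤ} (hn : t < n)
    (hL : ∀ m : ℤ, t < m → Commute (S.G n : Module.End ℂ S.carrier) (S.L m))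
    (hG : ∀ j : ℤ, t < j → (S.G n * S.G j + S.G j * S.G n : Module.End ℂ S.carrier) = 0) :
    S.G n = 0 := by
  have hinv : S.Invariant (LinearMap.ker (S.G n)) := invariant_ker (-1) hL fun j hj ↦ by
    rw [neg_one_smul, eq_neg_of_add_eq_zero_left (hG j hj)]
  have hsq : (S.G n * S.G n : Module.End ℂ S.carrier) = 0 := by
    simpa [← two_smul ℂ] using hG n hn
  by_contra hne
  have hinj : Function.Injective (S.G n) := LinearMap.ker_eq_bot.1
    (not_not.1 fun hker ↦ hne (hS.eq_zero_of_invariant_ker hinv hker))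
  refine hne (LinearMap.ext fun v ↦ hinj ?_)
  simpa using LinearMap.congr_fun hsq v

theorem IsSimple.finrank_eq_one_of_forall_eq_smul_one (hS : S.IsSimple)
    (hL : ∀ m : ℤ, t < m → ∃ c : ℂ, S.L m = c • (1 : Module.End ℂ S.carrier))
    (hG : ∀ j : ℤ, t < j → ∃ c : ℂ, S.G j = c • (1 : Module.End ℂ S.carrier)) :
    Module.finrank ℂ S.carrier = 1 := by
  obtain ⟨w, hw⟩ := hS.1
  have hinv : S.Invariant (Submodule.span ℂ {w}) := by
    refine ⟨fun m hm v hv ↦ ?_, fun j hj v hv ↦ ?_⟩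
    · obtain ⟨c, hc⟩ := hL m hm
      exact hc ▸ Submodule.smul_mem _ c hv
    · obtain ⟨c, hc⟩ := hG j hj
      exact hc ▸ Submodule.smul_mem _ c hv
  exact (finrank_eq_one_iff_of_nonzero w hw).2
    ((hS.2 _ hinv).resolve_left (Submodule.span_singleton_eq_bot.not.2 hw))

/-- All `G_{k+1/2}` with `k > n`, and all `L_k` with `k > n` lying in the derived subalgebra of
`p^{(t)}`, act as zero. The derived subalgebra contains `L_k` exactly for `k ≥ 2t + 3`; outside it
a simple module may well have `L_k` acting by a nonzero scalar. -/
def VanishesAbove (S : PRep t) (n : ℤ) : Prop :=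
  ∀ k : ℤ, n < k → S.G k = 0 ∧ (2 * (t : ℤ) + 3 ≤ k → S.L k = 0)

attribute [local instance] LieRing.ofAssociativeRing in
theorem exists_L_eq_zero (S : PRep t) [FiniteDimensional ℂ S.carrier] :
    ∃ k : ℤ, t < k ∧ S.L k = 0 := by
  by_contra! hne
  have hindep : LinearIndepOn ℂ (S.L : ℤ → Module.End ℂ S.carrier) (Set.Ioi (t : ℤ)) := by
    refine linearIndepOn_of_lie_eq_sub_smul (fun m hm n hn ↦ ?_) (fun m hm n hn ↦ ?_) ?_
    · rw [Set.mem_Ioi] at *; omega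
    · exact lie_L_L hm hn
    · exact hne
  exact Set.Ioi_infinite (t : ℤ) hindep.finite

theorem exists_vanishesAbove (S : PRep t) [FiniteDimensional ℂ S.carrier] :
    ∃ n : ℤ, t ≤ n ∧ S.VanishesAbove n := by
  obtain ⟨p, hp, hLp⟩ := S.exists_L_eq_zero
  have hL : ∀ k : ℤ, 2 * p < k → S.L k = 0 := fun k hk ↦ by
    simpa using L_add_eq_zero hp (n := k - p) (by omega) (by omega) hLp
  refine ⟨2 * p + 2 * t + 4, by omega, fun k hk ↦ ⟨?_, fun _ ↦ hL k (by omega)⟩⟩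
  simpa using G_add_eq_zero (m := k - (t + 1)) (n := t + 1) (by omega) (by omega) (by omega)
    (hL _ (by omega))

theorem VanishesAbove.G_eq_zero {n : ℤ} (h : S.VanishesAbove n) (hS : S.IsSimple)
    (hn : t < n) : S.G n = 0 := by
  refine hS.G_eq_zero_of_anticommute hn (fun m hm ↦ ?_) fun j hj ↦ ?_
  · exact (commute_L_G hm hn (h _ (by omega)).1).symm
  · rw [G_mul_G_add_G_mul_G hn hj, (h _ (by omega)).2 (by omega), smul_zero]

theorem VanishesAbove.L_eq_zero [FiniteDimensional ℂ S.carrier] {n : ℤ} (h : S.VanishesAbove n)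
    (hS : S.IsSimple) (hn : 2 * (t : ℤ) + 3 ≤ n) : S.L n = 0 :=
  hS.L_eq_zero_of_commute hn
    (fun _ hm ↦ commute_L_L (by omega) hm ((h _ (by omega)).2 (by omega)))
    fun _ hj ↦ commute_L_G (by omega) hj (h _ (by omega)).1

theorem IsSimple.vanishesAbove [FiniteDimensional ℂ S.carrier] (hS : S.IsSimple) :
    S.VanishesAbove t := by
  obtain ⟨N, hN, hvan⟩ := S.exists_vanishesAbove
  induction N, hN using Int.leInduction with
  | base => exact hvan
  | succ n hn ih =>
    refine ih fun k hk ↦ ?_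
    obtain rfl | hlt := (Int.add_one_le_of_lt hk).eq_or_lt
    · exact ⟨hvan.G_eq_zero hS (by omega), hvan.L_eq_zero hS⟩
    · exact hvan k hlt

theorem IsSimple.exists_L_eq_smul_one [FiniteDimensional ℂ S.carrier] (hS : S.IsSimple) {n : ℤ}
    (hn : t < n) : ∃ c : ℂ, S.L n = c • (1 : Module.End ℂ S.carrier) := by
  have hvan := hS.vanishesAbove
  refine hS.exists_eq_smul_one_of_commute (fun m hm ↦ ?_) fun j hj ↦ ?_
  · obtain rfl | hne := eq_or_ne n m
    · exact Commute.refl _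
    · exact commute_L_L hn hm ((hvan _ (by omega)).2 (by omega))
  · exact (hvan j hj).1 ▸ Commute.zero_right _

end PRep

/-- Let `t ∈ ℤ_+` and let `S` be a finite dimensional simple module over
the Lie superalgebra `p^{(t)}`.  Then `dim S = 1`. -/
theorem pRep_finite_dimensional_simple_dim_one
    (t : ℕ) (ht : 0 < t) (S : PRep t)
    (hfd : FiniteDimensional ℂ S.carrier) (hsimple : S.IsSimple) :
    Module.finrank ℂ S.carrier = 1 := by
  have hL : ∀ m : ℤ, t < m → ∃ c : ℂ, S.L m = c • (1 : Module.End ℂ S.carrier) :=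
    fun _ hm ↦ hsimple.exists_L_eq_smul_one hm
  have hG : ∀ j : ℤ, t < j → S.G j = 0 := fun j hj ↦ (hsimple.vanishesAbove j hj).1
  exact hsimple.finrank_eq_one_of_forall_eq_smul_one hL
    fun j hj ↦ ⟨0, by rw [hG j hj, zero_smul]⟩
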